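/- Let S be a symmetric numerical semigroup with genus g and conductor c = 2g. Let q_0 be the least element q ∈ S with ν(q) < δ(q) if such an element exists, and set q_0 = c − 1 otherwise; define m_0 = 4g − 2 − q_0. Then the minimum formula holds at every m ∈ S with m > m_0. Moreover, if some q ∈ S with ν(q) < δ(q) exists, then m_0 ∈ S and the minimum formula does not hold at m_0. -/

import Mathlib

/-!
Write `g` for the genus. Counting the pairs `a + b = n` according to membership of `a` and `b`
gives, for `n ≥ 2g`, `ν(n) = n + 1 - 2g + G(n)`, where `G(n)` is the number of pairs of gaps with
sum `n` (`nu_add_two_genus`). The symmetry `a ↦ 2g - 1 - a` exchanges gaps and elements, so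
`G(n) = ν(4g - 2 - n)`; this is `gapPairs_eq_nu` when `4g - 2 - n ≥ 0`, and `G(n) = 0` whenever
`4g - 2 - n ∉ S` (`gapPairs_eq_zero`).

Let `m ≥ 2g`, `k = m + 1 - 2g`, `q = 4g - 2 - m`, and let `s` be the least element of `S` that is
at least `k`. At `r = s + 2g - 1 ≥ m` one has `4g - 2 - r = 2g - 1 - s ∉ S`, so `ν(r) = s` and
`δ_FR(m) ≤ s`. A value `ν(r) < s` with `r ≥ m` forces `t = r + 1 - 2g` into the run of gaps
`[k, s)`; then `q' = 2g - 1 - t ≤ q` lies in `S`, `δ(q') ≥ s - t`, and so `ν(q') < δ(q')`. This is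
impossible for `q < q₀`, whereas `q = q₀` makes `ν(m)` itself smaller than `s`.
All `m > m₀` satisfy `m ≥ 2g`, since `ν(q) < δ(q)` with `q ∈ S` forces `q ≤ 2g - 2`.
-/

/-- A numerical semigroup: a subset of ℕ containing 0, closed under addition,
with finite complement in ℕ. -/
def IsNumericalSemigroup (S : Set ℕ) : Prop :=
  0 ∈ S ∧ (∀ a b, a ∈ S → b ∈ S → a + b ∈ S) ∧ Sᶜ.Finite

/-- The genus of a numerical semigroup: the number of gaps. -/
noncomputable def genus (S : Set ℕ) : ℕ := Sᶜ.ncard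

/-- The conductorNS: the least `c` such that every `n ≥ c` belongs to `S`. -/
noncomputable def conductorNS (S : Set ℕ) : ℕ := sInf {c | ∀ n, c ≤ n → n ∈ S}

/-- `nu S r` is the number of pairs `(a,b) ∈ S × S` with `a + b = r`. -/
noncomputable def nu (S : Set ℕ) (r : ℕ) : ℕ :=
  {p : ℕ × ℕ | p.1 ∈ S ∧ p.2 ∈ S ∧ p.1 + p.2 = r}.ncard

/-- The Feng–Rao distance: `δ_FR(m) = min {ν(r) : r ∈ S, r ≥ m}`. -/
noncomputable def deltaFR (S : Set ℕ) (m : ℕ) : ℕ :=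
  sInf (nu S '' {r | r ∈ S ∧ m ≤ r})

/-- Membership of an integer in a subset of ℕ (negative integers never belong). -/
def memZ (S : Set ℕ) (r : ℤ) : Prop := 0 ≤ r ∧ r.toNat ∈ S

/-- `S` is symmetric: for every integer `r`, `r ∈ S ↔ c - 1 - r ∉ S`. -/
def IsSymmetricNS (S : Set ℕ) : Prop :=
  ∀ r : ℤ, memZ S r ↔ ¬ memZ S ((conductorNS S : ℤ) - 1 - r)

/-- `δ(q)`: the least integer `d ≥ 1` such that `q - d ∉ S`
(negative integers are not in `S`). -/
noncomputable def deltaGap (S : Set ℕ) (q : ℕ) : ℕ :=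
  sInf {d | 1 ≤ d ∧ ¬ memZ S ((q : ℤ) - (d : ℤ))}

/-- The `i`-th Apéry element of `S` relative to `e`:
the least element of `S` congruent to `i` modulo `e`. -/
noncomputable def apery (S : Set ℕ) (e i : ℕ) : ℕ :=
  sInf {m | m ∈ S ∧ m % e = i % e}

/-- The Apéry relations `α_{i,j}` defined by `a_i + a_j = a_{(i+j) % e} + α_{i,j} * e`. -/
noncomputable def aperyRel (S : Set ℕ) (e i j : ℕ) : ℕ :=
  (apery S e i + apery S e j - apery S e ((i + j) % e)) / e

/-- The "minimum formula" holds at `m`: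
`δ_FR(m) = min {r ∈ S : r ≥ m + 1 - 2g}`. -/
def MinFormula (S : Set ℕ) (m : ℕ) : Prop :=
  deltaFR S m = sInf {r | r ∈ S ∧ (m : ℤ) + 1 - 2 * (genus S : ℤ) ≤ (r : ℤ)}

/-- The number of ordered pairs of gaps of `S` with sum `n`. -/
noncomputable def gapPairs (S : Set ℕ) (n : ℕ) : ℕ :=
  {p : ℕ × ℕ | p.1 ∉ S ∧ p.2 ∉ S ∧ p.1 + p.2 = n}.ncard

open Classical in
lemma ncard_pairs_eq_sum (T : Set ℕ) (n : ℕ) :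
    (({p : ℕ × ℕ | p.1 ∈ T ∧ p.2 ∈ T ∧ p.1 + p.2 = n}.ncard : ℕ) : ℤ) =
      ∑ p ∈ Finset.HasAntidiagonal.antidiagonal n,
        (if p.1 ∈ T then (1 : ℤ) else 0) * (if p.2 ∈ T then 1 else 0) := by
  have h : {p : ℕ × ℕ | p.1 ∈ T ∧ p.2 ∈ T ∧ p.1 + p.2 = n} =
      ((Finset.HasAntidiagonal.antidiagonal n).filter (fun p => p.1 ∈ T ∧ p.2 ∈ T) : Finset (ℕ × ℕ)) := by
    ext p
    simp only [Set.mem_ofPred_eq, Finset.coe_filter, Finset.HasAntidiagonal.mem_antidiagonal]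
    tauto
  rw [h, Set.ncard_coe_finset, Finset.card_filter]
  push_cast
  refine Finset.sum_congr rfl fun p _ => ?_
  by_cases h1 : p.1 ∈ T <;> by_cases h2 : p.2 ∈ T <;> simp [h1, h2]

open Classical in
lemma sum_mem_indicator (T : Set ℕ) (n : ℕ) (hn : ∀ a ∈ T, a ≤ n) :
    ∑ p ∈ Finset.HasAntidiagonal.antidiagonal n, (if p.1 ∈ T then (1 : ℤ) else 0) = T.ncard := by
  rw [Finset.Nat.sum_antidiagonal_eq_sum_range_succ_mk]
  have h : T = ((Finset.range n.succ).filter (fun a => a ∈ T) : Finset ℕ) := by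
    ext a
    simp only [Finset.coe_filter, Finset.mem_range, Set.mem_ofPred_eq]
    exact ⟨fun ha => ⟨Nat.lt_succ_of_le (hn a ha), ha⟩, fun ha => ha.2⟩
  conv_rhs => rw [h]
  rw [Set.ncard_coe_finset, Finset.card_filter]
  push_cast
  rfl

/-- Inclusion–exclusion: `ν(n) = (n + 1) - 2g + G(n)` once all gaps are at most `n`. -/
lemma nu_add_two_genus (S : Set ℕ) (n : ℕ) (hn : ∀ a, a ∉ S → a ≤ n) :
    nu S n + 2 * genus S = n + 1 + gapPairs S n := by
  classical
  -- Keeping `T = Sᶜ` opaque makes all indicator functions use the same decidability instance.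
  obtain ⟨T, hTS⟩ : ∃ T, T = Sᶜ := ⟨_, rfl⟩
  have hT : ∀ a, a ∈ T ↔ a ∉ S := fun a => by rw [hTS]; rfl
  have h1 := ncard_pairs_eq_sum S n
  have h2 := ncard_pairs_eq_sum T n
  have h3 := sum_mem_indicator T n fun a ha => hn a ((hT a).1 ha)
  have h4 : ∑ p ∈ Finset.HasAntidiagonal.antidiagonal n, (if p.2 ∈ T then (1 : ℤ) else 0) = T.ncard := by
    rw [← h3]
    exact Finset.Nat.sum_antidiagonal_swap (n := n) (f := fun p => if p.1 ∈ T then (1 : ℤ) else 0)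
  have h5 : ∑ p ∈ Finset.HasAntidiagonal.antidiagonal n, (1 : ℤ) = n + 1 := by
    simp
  have key : ∑ p ∈ Finset.HasAntidiagonal.antidiagonal n,
        (if p.1 ∈ S then (1 : ℤ) else 0) * (if p.2 ∈ S then 1 else 0) =
      ∑ p ∈ Finset.HasAntidiagonal.antidiagonal n, (1 : ℤ)
      - ∑ p ∈ Finset.HasAntidiagonal.antidiagonal n, (if p.1 ∈ T then (1 : ℤ) else 0)
      - ∑ p ∈ Finset.HasAntidiagonal.antidiagonal n, (if p.2 ∈ T then (1 : ℤ) else 0)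
      + ∑ p ∈ Finset.HasAntidiagonal.antidiagonal n,
        (if p.1 ∈ T then (1 : ℤ) else 0) * (if p.2 ∈ T then 1 else 0) := by
    rw [← Finset.sum_sub_distrib, ← Finset.sum_sub_distrib, ← Finset.sum_add_distrib]
    refine Finset.sum_congr rfl fun p _ => ?_
    by_cases h1 : p.1 ∈ S <;> by_cases h2 : p.2 ∈ S <;> simp [hT, h1, h2]
  rw [← h1, ← h2, h3, h4, h5] at key
  have e1 : nu S n = {p : ℕ × ℕ | p.1 ∈ S ∧ p.2 ∈ S ∧ p.1 + p.2 = n}.ncard := rfl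
  have e2 : gapPairs S n = {p : ℕ × ℕ | p.1 ∈ T ∧ p.2 ∈ T ∧ p.1 + p.2 = n}.ncard := by rw [hTS]; rfl
  have e3 : genus S = T.ncard := by rw [hTS]; rfl
  rw [← e1, ← e2, ← e3] at key
  omega

lemma memZ_natCast (S : Set ℕ) (a : ℕ) : memZ S (a : ℤ) ↔ a ∈ S := by
  simp [memZ]

lemma mem_of_two_genus_le {S : Set ℕ} (hsym : IsSymmetricNS S)
    (hcg : conductorNS S = 2 * genus S) {n : ℕ} (hn : 2 * genus S ≤ n) : n ∈ S := by
  rw [← memZ_natCast, hsym n]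
  rintro ⟨h, -⟩
  omega

lemma mem_iff_reflect {S : Set ℕ} (hsym : IsSymmetricNS S)
    (hcg : conductorNS S = 2 * genus S) {a b : ℕ} (hab : a + b + 1 = 2 * genus S) :
    a ∈ S ↔ b ∉ S := by
  have h := hsym a
  have e : (conductorNS S : ℤ) - 1 - a = (b : ℤ) := by omega
  rwa [e, memZ_natCast, memZ_natCast] at h

lemma gapPairs_eq_nu {S : Set ℕ} (hsym : IsSymmetricNS S)
    (hcg : conductorNS S = 2 * genus S) {n q : ℕ} (hn : 2 * genus S ≤ n + 1)
    (hq : n + q + 2 = 4 * genus S) : gapPairs S n = nu S q := by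
  have hgap : ∀ a, a ∉ S → a < 2 * genus S := fun a ha => by
    by_contra h
    exact ha (mem_of_two_genus_le hsym hcg (by omega))
  unfold gapPairs nu
  refine Set.ncard_congr (fun p _ => (2 * genus S - 1 - p.1, 2 * genus S - 1 - p.2)) ?_ ?_ ?_
  · rintro ⟨a, b⟩ ⟨ha, hb, hab⟩
    have := hgap a ha
    have := hgap b hb
    simp only at ha hb hab ⊢
    refine ⟨(mem_iff_reflect hsym hcg (b := a) ?_).2 ha,
      (mem_iff_reflect hsym hcg (b := b) ?_).2 hb, ?_⟩ <;> simp only <;> omega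
  · rintro ⟨a, b⟩ ⟨a', b'⟩ ⟨ha, hb, hab⟩ ⟨ha', hb', hab'⟩ h
    have := hgap a ha
    have := hgap b hb
    have := hgap a' ha'
    have := hgap b' hb'
    simp only [Prod.mk.injEq] at h ⊢
    omega
  · rintro ⟨s, t⟩ ⟨hs, ht, hst⟩
    simp only at hs ht hst
    refine ⟨(2 * genus S - 1 - s, 2 * genus S - 1 - t), ⟨?_, ?_, ?_⟩, ?_⟩
    · exact (mem_iff_reflect hsym hcg (by simp only; omega)).1 hs
    · exact (mem_iff_reflect hsym hcg (by simp only; omega)).1 ht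
    · simp only; omega
    · simp only [Prod.mk.injEq]; omega

lemma gapPairs_eq_zero {S : Set ℕ} (hS : IsNumericalSemigroup S) (hsym : IsSymmetricNS S)
    (hcg : conductorNS S = 2 * genus S) {n : ℕ}
    (hq : ∀ q : ℕ, n + q + 2 = 4 * genus S → q ∉ S) : gapPairs S n = 0 := by
  have hgap : ∀ a, a ∉ S → a < 2 * genus S := fun a ha => by
    by_contra h
    exact ha (mem_of_two_genus_le hsym hcg (by omega))
  unfold gapPairs
  convert Set.ncard_empty (ℕ × ℕ)
  rw [Set.eq_empty_iff_forall_notMem]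
  rintro ⟨a, b⟩ ⟨ha, hb, hab⟩
  have h1 := hgap a ha
  have h2 := hgap b hb
  simp only at ha hb hab h1 h2
  -- The reflections of two gaps are elements of `S`, and so is their sum `4g - 2 - n`.
  have ha' := (mem_iff_reflect hsym hcg (a := 2 * genus S - 1 - a) (b := a) (by omega)).2 ha
  have hb' := (mem_iff_reflect hsym hcg (a := 2 * genus S - 1 - b) (b := b) (by omega)).2 hb
  exact hq _ (by omega) (hS.2.1 _ _ ha' hb')

lemma deltaGap_le {S : Set ℕ} {q d : ℕ} (hd : 1 ≤ d) (h : ∀ a : ℕ, a + d = q → a ∉ S) :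
    deltaGap S q ≤ d := by
  refine Nat.sInf_le ⟨hd, ?_⟩
  rintro ⟨h0, h1⟩
  exact h _ (by omega) h1

lemma le_deltaGap {S : Set ℕ} {q e : ℕ}
    (h : ∀ d, 1 ≤ d → d < e → ∃ a ∈ S, a + d = q) : e ≤ deltaGap S q := by
  have hne : {d : ℕ | 1 ≤ d ∧ ¬ memZ S ((q : ℤ) - (d : ℤ))}.Nonempty :=
    ⟨q + 1, by omega, fun hm => by have := hm.1; push_cast at this; omega⟩
  have hmem : 1 ≤ deltaGap S q ∧ ¬ memZ S ((q : ℤ) - (deltaGap S q : ℤ)) := Nat.sInf_mem hne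
  by_contra hlt
  obtain ⟨a, ha, hadd⟩ := h _ hmem.1 (by omega)
  have e : (q : ℤ) - (deltaGap S q : ℤ) = a := by omega
  exact hmem.2 (by rwa [e, memZ_natCast])

/-- Elements with `ν(q) < δ(q)` are smaller than the Frobenius number `2g - 1`. -/
lemma add_two_le_of_nu_lt {S : Set ℕ} (hS : IsNumericalSemigroup S) (hsym : IsSymmetricNS S)
    (hcg : conductorNS S = 2 * genus S) {q : ℕ} (hq : q ∈ S) (hlt : nu S q < deltaGap S q) :
    q + 2 ≤ 2 * genus S := by
  have hfrob : ∀ a : ℕ, a + 1 = 2 * genus S → a ∉ S := fun a ha h =>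
    (mem_iff_reflect hsym hcg (b := 0) (by omega)).1 h hS.1
  by_contra hcon
  have hq1 : q + 1 ≠ 2 * genus S := fun h => hfrob q h hq
  have h1 := nu_add_two_genus S q fun a ha => by
    by_contra h
    exact ha (mem_of_two_genus_le hsym hcg (by omega))
  have h2 : deltaGap S q ≤ q + 1 - 2 * genus S :=
    deltaGap_le (by omega) fun a ha => hfrob a (by omega)
  omega

lemma minFormula_of_forall {S : Set ℕ} (hS : IsNumericalSemigroup S) (hsym : IsSymmetricNS S)
    (hcg : conductorNS S = 2 * genus S) {m : ℕ} (hm : 2 * genus S ≤ m)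
    (h : ∀ q ∈ S, m + q + 2 ≤ 4 * genus S → deltaGap S q ≤ nu S q) : MinFormula S m := by
  have hgap : ∀ n, 2 * genus S ≤ n → ∀ a, a ∉ S → a ≤ n := fun n hn a ha => by
    by_contra h
    exact ha (mem_of_two_genus_le hsym hcg (by omega))
  unfold MinFormula
  set T := {r | r ∈ S ∧ (m : ℤ) + 1 - 2 * (genus S : ℤ) ≤ (r : ℤ)} with hT
  have hne : T.Nonempty := ⟨m + 1, mem_of_two_genus_le hsym hcg (by omega), by push_cast; omega⟩
  obtain ⟨hs, hsk⟩ := Nat.sInf_mem hne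
  have hmin : ∀ t, t ∈ S → (m : ℤ) + 1 - 2 * (genus S : ℤ) ≤ (t : ℤ) → sInf T ≤ t :=
    fun t h1 h2 => Nat.sInf_le ⟨h1, h2⟩
  generalize sInf T = s at hs hsk hmin
  apply le_antisymm
  · -- The value `s` is attained at `r = s + 2g - 1`.
    refine Nat.sInf_le ⟨s + 2 * genus S - 1,
      ⟨mem_of_two_genus_le hsym hcg (by omega), by omega⟩, ?_⟩
    have h1 := nu_add_two_genus S (s + 2 * genus S - 1) (hgap _ (by omega))
    have h2 : gapPairs S (s + 2 * genus S - 1) = 0 :=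
      gapPairs_eq_zero hS hsym hcg fun q hq =>
        (mem_iff_reflect hsym hcg (by omega)).1 hs
    omega
  · refine le_csInf ⟨_, m, ⟨mem_of_two_genus_le hsym hcg hm, le_rfl⟩, rfl⟩ ?_
    rintro _ ⟨r, ⟨-, hr⟩, rfl⟩
    have h1 := nu_add_two_genus S r (hgap _ (by omega))
    by_contra hlt
    -- `t = r + 1 - 2g` lies in the run of gaps below `s`.
    have hrun : ∀ t, r + 1 - 2 * genus S ≤ t → t < s → t ∉ S := fun t ht hts htS => by
      have := hmin t htS (by omega)
      omega
    have ht := hrun (r + 1 - 2 * genus S) le_rfl (by omega)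
    have htg : r + 1 - 2 * genus S < 2 * genus S := by
      by_contra hcon
      exact ht (mem_of_two_genus_le hsym hcg (by omega))
    obtain ⟨q, hq⟩ : ∃ q, r + q + 2 = 4 * genus S := ⟨4 * genus S - 2 - r, by omega⟩
    have hqS : q ∈ S := (mem_iff_reflect hsym hcg (by omega)).2 ht
    have h2 := gapPairs_eq_nu hsym hcg (by omega) hq
    have h3 := h q hqS (by omega)
    have h4 : s - (r + 1 - 2 * genus S) ≤ deltaGap S q := by
      refine le_deltaGap fun d hd hds => ?_
      have hg := hrun (r + 1 - 2 * genus S + d) (by omega) (by omega)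
      have hg' : r + 1 - 2 * genus S + d < 2 * genus S := by
        by_contra hcon
        exact hg (mem_of_two_genus_le hsym hcg (by omega))
      exact ⟨q - d, (mem_iff_reflect hsym hcg (by omega)).2 hg, by omega⟩
    omega

lemma not_minFormula_of_nu_lt {S : Set ℕ} (hS : IsNumericalSemigroup S)
    (hsym : IsSymmetricNS S) (hcg : conductorNS S = 2 * genus S) {m q : ℕ} (hqS : q ∈ S)
    (hlt : nu S q < deltaGap S q) (hmq : m + q + 2 = 4 * genus S) : ¬ MinFormula S m := by
  have hq := add_two_le_of_nu_lt hS hsym hcg hqS hlt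
  unfold MinFormula
  set T := {r | r ∈ S ∧ (m : ℤ) + 1 - 2 * (genus S : ℤ) ≤ (r : ℤ)} with hT
  have hne : T.Nonempty := ⟨m + 1, mem_of_two_genus_le hsym hcg (by omega), by push_cast; omega⟩
  obtain ⟨hs, hsk⟩ := Nat.sInf_mem hne
  generalize sInf T = s at hs hsk
  have h1 : deltaFR S m ≤ nu S m :=
    Nat.sInf_le ⟨m, ⟨mem_of_two_genus_le hsym hcg (by omega), le_rfl⟩, rfl⟩
  have h2 := nu_add_two_genus S m fun a ha => by
    by_contra h
    exact ha (mem_of_two_genus_le hsym hcg (by omega))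
  have h3 := gapPairs_eq_nu hsym hcg (by omega) hmq
  have hrefl : ∀ a, a + s + 1 = 2 * genus S → a ∉ S := fun a ha haS =>
    (mem_iff_reflect hsym hcg ha).1 haS hs
  -- `s` cannot be `k = m + 1 - 2g`, which is the reflection of `q ∈ S`.
  have h4 : s + q + 1 ≠ 2 * genus S := fun h => hrefl q (by omega) hqS
  have h5 : deltaGap S q ≤ s + q + 1 - 2 * genus S :=
    deltaGap_le (by omega) fun a ha => hrefl a (by omega)
  omega

/-- let `q₀` be the least `q ∈ S` with `ν(q) < δ(q)` if such exists,
and `q₀ = c - 1` otherwise, and set `m₀ = 4g - 2 - q₀`. Then the minimum formula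
holds at every `m ∈ S` with `m > m₀`; moreover, if some `q ∈ S` with
`ν(q) < δ(q)` exists, then `m₀ ∈ S` and the minimum formula fails at `m₀`. -/
theorem stmt_18 (S : Set ℕ) (hS : IsNumericalSemigroup S) (hsym : IsSymmetricNS S)
    (hcg : conductorNS S = 2 * genus S)
    (q₀ : ℕ)
    (hq₀a : (∃ q, q ∈ S ∧ nu S q < deltaGap S q) →
      q₀ = sInf {q | q ∈ S ∧ nu S q < deltaGap S q})
    (hq₀b : (¬ ∃ q, q ∈ S ∧ nu S q < deltaGap S q) → q₀ = conductorNS S - 1)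
    (m₀ : ℤ) (hm₀ : m₀ = 4 * (genus S : ℤ) - 2 - (q₀ : ℤ)) :
    (∀ m ∈ S, m₀ < (m : ℤ) → MinFormula S m) ∧
      ((∃ q, q ∈ S ∧ nu S q < deltaGap S q) →
        0 ≤ m₀ ∧ m₀.toNat ∈ S ∧ ¬ MinFormula S m₀.toNat) := by
  by_cases hex : ∃ q, q ∈ S ∧ nu S q < deltaGap S q
  · have hq := hq₀a hex
    obtain ⟨hqS, hlt⟩ := Nat.sInf_mem (s := {q | q ∈ S ∧ nu S q < deltaGap S q}) hex
    rw [← hq] at hqS hlt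
    have hle := add_two_le_of_nu_lt hS hsym hcg hqS hlt
    refine ⟨fun m _ hm => minFormula_of_forall hS hsym hcg (by omega) fun q hqS' hmq => ?_,
      fun _ => ⟨by omega, mem_of_two_genus_le hsym hcg (by omega),
        not_minFormula_of_nu_lt hS hsym hcg hqS hlt (by omega)⟩⟩
    by_contra hcon
    have : q₀ ≤ q := hq ▸ Nat.sInf_le ⟨hqS', not_le.1 hcon⟩
    omega
  · have hq := hq₀b hex
    -- For `g = 0` the subtraction `c - 1` truncates to `0`, but then `2g ≤ m` is automatic.
    refine ⟨fun m _ hm => minFormula_of_forall hS hsym hcg (by omega) fun q hqS _ => ?_,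
      fun h => absurd h hex⟩
    by_contra hcon
    exact hex ⟨q, hqS, not_le.1 hcon⟩
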